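/- Let q be continuous on [-M,M] and suppose every solution of the Dirichlet eigenvalue problem ψ'' - qψ = λψ, ψ(±M)=0 has λ < 0 (negative Dirichlet spectrum). Let φ₀, ψ₀ be nonzero solutions of ψ'' = qψ with φ₀(-M) = 0, ψ₀(M) = 0. Then φ₀ and ψ₀ have no zeros in the open interval, are linearly independent, and the unique solution of ψ'' = qψ with ψ(-M) = ψ(M) = 1 is strictly positive on [-M,M]. -/

import Mathlib

theorem aux_prufer (M : ℝ) (hM : 0 < M) (c : ℝ → ℝ) (hc : Continuous c) (C : ℝ)
    (hC : ∀ t, |c t| ≤ C) :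
    ∃ θ : ℝ → ℝ, Continuous θ ∧ θ (-M) = 0 ∧
      ∀ x ∈ Set.Icc (-M) M, HasDerivAt θ (1 - (1 + c x) * Real.sin (θ x) ^ 2) x := by
  have hC0 : 0 ≤ C := (abs_nonneg _).trans (hC 0)
  have hlip : ∀ t, LipschitzWith (Real.toNNReal (1 + C))
      (fun y : ℝ => 1 - (1 + c t) * Real.sin y ^ 2) := by
    intro t
    refine LipschitzWith.of_dist_le_mul fun a b => ?_
    rw [Real.dist_eq, Real.dist_eq, Real.coe_toNNReal _ (by linarith)]
    have h1 : 1 - (1 + c t) * Real.sin a ^ 2 - (1 - (1 + c t) * Real.sin b ^ 2)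
        = -((1 + c t) * (Real.sin (a + b) * Real.sin (a - b))) := by
      rw [Real.sin_add, Real.sin_sub]
      have ha := Real.sin_sq_add_cos_sq a
      have hb := Real.sin_sq_add_cos_sq b
      have : Real.cos a ^ 2 = 1 - Real.sin a ^ 2 := by linarith
      have : Real.cos b ^ 2 = 1 - Real.sin b ^ 2 := by linarith
      linear_combination (-(1 + c t) * Real.sin b ^ 2) * ha + ((1 + c t) * Real.sin a ^ 2) * hb
    rw [h1, abs_neg, abs_mul, abs_mul]
    have h2 : |1 + c t| ≤ 1 + C := by
      have := abs_le.1 (hC t)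
      exact abs_le.2 ⟨by linarith, by linarith⟩
    have h3 : |Real.sin (a - b)| ≤ |a - b| := Real.abs_sin_le_abs
    have h4 : |Real.sin (a + b)| ≤ 1 := Real.abs_sin_le_one _
    have h5 : |Real.sin (a + b)| * |Real.sin (a - b)| ≤ 1 * |a - b| := by gcongr
    calc |1 + c t| * (|Real.sin (a + b)| * |Real.sin (a - b)|) ≤ (1 + C) * (1 * |a - b|) := by
          gcongr
      _ = _ := by ring
  have ht0 : -M ∈ Set.Icc (-M - 1) (M + 1) := ⟨by linarith, by linarith⟩
  have hP : IsPicardLindelof (fun t y : ℝ => 1 - (1 + c t) * Real.sin y ^ 2)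
      (⟨-M, ht0⟩ : Set.Icc (-M - 1) (M + 1)) (0 : ℝ)
      (Real.toNNReal ((2 + C) * (2 * M + 1))) 0 (Real.toNNReal (2 + C))
      (Real.toNNReal (1 + C)) := by
    refine ⟨fun t _ => (hlip t).lipschitzOnWith, fun y _ => ?_, fun t _ y _ => ?_, ?_⟩
    · fun_prop
    · rw [Real.norm_eq_abs, Real.coe_toNNReal _ (by linarith)]
      have h2 := abs_le.1 (hC t)
      have h3 := Real.sin_sq_le_one y
      have h4 := sq_nonneg (Real.sin y)
      rw [abs_le]; constructor <;> nlinarith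
    · rw [Real.coe_toNNReal _ (by linarith), Real.coe_toNNReal _ (by positivity)]
      rw [max_eq_left (by simp only []; linarith)]
      simp only [NNReal.coe_zero]
      apply le_of_eq
      ring
  obtain ⟨α, h0, hα⟩ := hP.exists_eq_forall_mem_Icc_hasDerivWithinAt₀
  have hle : -M - 1 ≤ M + 1 := by linarith
  have hαc : ContinuousOn α (Set.Icc (-M - 1) (M + 1)) := fun t ht => (hα t ht).continuousWithinAt
  have heq : ∀ x ∈ Set.Icc (-M - 1) (M + 1),
      Set.IccExtend hle ((Set.Icc (-M - 1) (M + 1)).restrict α) x = α x := by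
    intro x hx
    rw [Set.IccExtend_of_mem _ _ hx]; rfl
  refine ⟨Set.IccExtend hle ((Set.Icc (-M - 1) (M + 1)).restrict α),
    (continuousOn_iff_continuous_restrict.1 hαc).Icc_extend', ?_, fun x hx => ?_⟩
  · rw [heq _ ht0]; exact h0
  · have hx' : x ∈ Set.Icc (-M - 1) (M + 1) := ⟨by linarith [hx.1], by linarith [hx.2]⟩
    have hn : Set.Icc (-M - 1) (M + 1) ∈ nhds x :=
      Icc_mem_nhds (by linarith [hx.1]) (by linarith [hx.2])
    rw [heq _ hx']
    refine ((hα x hx').hasDerivAt hn).congr_of_eventuallyEq ?_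
    filter_upwards [hn] with y hy using heq y hy

theorem aux_amp (c θ : ℝ → ℝ) (a : ℝ) (hc : Continuous c) (hθ : Continuous θ) :
    ∃ r : ℝ → ℝ, (∀ x, 0 < r x) ∧ r a = 1 ∧
      ∀ x, HasDerivAt r (r x * ((1 + c x) * Real.sin (θ x) * Real.cos (θ x))) x := by
  refine ⟨fun x => Real.exp (∫ t in a..x, (1 + c t) * Real.sin (θ t) * Real.cos (θ t)),
    fun x => Real.exp_pos _, by simp, fun x => ?_⟩
  have hcont : Continuous fun t => (1 + c t) * Real.sin (θ t) * Real.cos (θ t) := by fun_prop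
  exact (hcont.integral_hasStrictDerivAt a x).hasDerivAt.exp

/-- From a Prüfer angle, build a global C² solution. -/
theorem aux_sol (M : ℝ) (hM : 0 < M) (c : ℝ → ℝ) (hc : Continuous c) (θ : ℝ → ℝ)
    (hθc : Continuous θ) (hθ0 : θ (-M) = 0)
    (hθ : ∀ x ∈ Set.Icc (-M) M, HasDerivAt θ (1 - (1 + c x) * Real.sin (θ x) ^ 2) x) :
    ∃ r Φ : ℝ → ℝ, (∀ x, 0 < r x) ∧ ContDiff ℝ 2 Φ ∧
      (∀ x ∈ Set.Icc (-M) M, Φ x = r x * Real.sin (θ x)) ∧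
      (∀ x ∈ Set.Icc (-M) M, deriv Φ x = r x * Real.cos (θ x)) ∧
      (∀ x ∈ Set.Icc (-M) M, deriv (deriv Φ) x = c x * Φ x) := by
  obtain ⟨r, hrpos, hr1, hr⟩ := aux_amp c θ (-M) hc hθc
  have hrc : Continuous r := continuous_iff_continuousAt.2 fun x => (hr x).continuousAt
  have hgc : Continuous fun t => c t * (r t * Real.sin (θ t)) := by fun_prop
  set P : ℝ → ℝ := fun x => 1 + ∫ t in (-M)..x, c t * (r t * Real.sin (θ t)) with hP
  have hPd : ∀ x, HasDerivAt P (c x * (r x * Real.sin (θ x))) x := fun x =>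
    (hgc.integral_hasStrictDerivAt (-M) x).hasDerivAt.const_add 1
  have hPc : Continuous P := continuous_iff_continuousAt.2 fun x => (hPd x).continuousAt
  set Φ : ℝ → ℝ := fun x => ∫ t in (-M)..x, P t with hΦ
  have hΦd : ∀ x, HasDerivAt Φ (P x) x := fun x =>
    (hPc.integral_hasStrictDerivAt (-M) x).hasDerivAt
  have hdΦ : deriv Φ = P := funext fun x => (hΦd x).deriv
  have hdP : deriv P = fun x => c x * (r x * Real.sin (θ x)) := funext fun x => (hPd x).deriv
  have hPeq : ∀ x ∈ Set.Icc (-M) M, P x = r x * Real.cos (θ x) := by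
    have hD : ∀ x ∈ Set.Icc (-M) M, HasDerivAt (fun x => P x - r x * Real.cos (θ x)) 0 x := by
      intro x hx
      refine ((hPd x).sub ((hr x).mul (hθ x hx).cos)).congr_deriv ?_
      linear_combination (-(1 + c x) * r x * Real.sin (θ x)) * Real.sin_sq_add_cos_sq (θ x)
    intro x hx
    have := constant_of_has_deriv_right_zero (fun x hx => (hD x hx).continuousAt.continuousWithinAt)
      (fun x hx => (hD x ⟨hx.1, hx.2.le⟩).hasDerivWithinAt) x hx
    simp [hP, hθ0, hr1] at this ⊢
    linarith
  have hΦeq : ∀ x ∈ Set.Icc (-M) M, Φ x = r x * Real.sin (θ x) := by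
    have hD : ∀ x ∈ Set.Icc (-M) M, HasDerivAt (fun x => Φ x - r x * Real.sin (θ x)) 0 x := by
      intro x hx
      refine ((hΦd x).sub ((hr x).mul (hθ x hx).sin)).congr_deriv ?_
      rw [hPeq x hx]
      ring
    intro x hx
    have := constant_of_has_deriv_right_zero (fun x hx => (hD x hx).continuousAt.continuousWithinAt)
      (fun x hx => (hD x ⟨hx.1, hx.2.le⟩).hasDerivWithinAt) x hx
    simp only [hΦ, hθ0, Real.sin_zero, intervalIntegral.integral_same] at this ⊢
    linarith
  refine ⟨r, Φ, hrpos, ?_, hΦeq, fun x hx => by rw [hdΦ, hPeq x hx], fun x hx => ?_⟩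
  · rw [show (2 : WithTop ℕ∞) = 1 + 1 by norm_num, contDiff_succ_iff_deriv]
    refine ⟨fun x => (hΦd x).differentiableAt, by simp, ?_⟩
    rw [hdΦ, contDiff_one_iff_deriv, hdP]
    exact ⟨fun x => (hPd x).differentiableAt, hgc⟩
  · rw [hdΦ, hdP, hΦeq x hx]

theorem aux_unique (M K : ℝ) (q : ℝ → ℝ) (hK : ∀ x ∈ Set.Icc (-M) M, |q x| ≤ K)
    (u : ℝ → ℝ) (hu : ContDiff ℝ 2 u)
    (hode : ∀ x ∈ Set.Icc (-M) M, deriv (deriv u) x = q x * u x)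
    (x₀ : ℝ) (hx₀ : x₀ ∈ Set.Icc (-M) M) (h0 : u x₀ = 0) (h1 : deriv u x₀ = 0) :
    ∀ x ∈ Set.Icc (-M) M, u x = 0 := by
  have hu1 : ∀ x, HasDerivAt u (deriv u x) x := fun x =>
    (hu.differentiable (by norm_num) x).hasDerivAt
  have hu2 : ContDiff ℝ 1 (deriv u) := by
    rw [show (2 : WithTop ℕ∞) = 1 + 1 by norm_num, contDiff_succ_iff_deriv] at hu
    exact hu.2.2
  have hu3 : ∀ x, HasDerivAt (deriv u) (deriv (deriv u) x) x := fun x =>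
    (hu2.differentiable (by norm_num) x).hasDerivAt
  have hE : ∀ s x, HasDerivAt (fun x => (u x ^ 2 + deriv u x ^ 2) * Real.exp (s * x))
      ((2 * u x * deriv u x + 2 * deriv u x * deriv (deriv u) x
        + s * (u x ^ 2 + deriv u x ^ 2)) * Real.exp (s * x)) x := by
    intro s x
    refine ((((hu1 x).pow 2).add ((hu3 x).pow 2)).mul
      (((hasDerivAt_id x).const_mul s).exp)).congr_deriv ?_
    simp
    ring
  have hkey : ∀ x ∈ Set.Icc (-M) M, |2 * u x * deriv u x + 2 * deriv u x * deriv (deriv u) x|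
      ≤ (1 + K) * (u x ^ 2 + deriv u x ^ 2) := by
    intro x hx
    rw [hode x hx, show 2 * u x * deriv u x + 2 * deriv u x * (q x * u x)
      = (1 + q x) * (2 * u x * deriv u x) by ring, abs_mul]
    have h2 := abs_le.1 (hK x hx)
    have h3 : |1 + q x| ≤ 1 + K := abs_le.2 ⟨by linarith, by linarith⟩
    have h4 : |2 * u x * deriv u x| ≤ u x ^ 2 + deriv u x ^ 2 :=
      abs_le.2 ⟨by nlinarith [sq_nonneg (u x + deriv u x)],
        by nlinarith [sq_nonneg (u x - deriv u x)]⟩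
    exact mul_le_mul h3 h4 (abs_nonneg _) ((abs_nonneg _).trans h3)
  have hmono : MonotoneOn (fun x => (u x ^ 2 + deriv u x ^ 2) * Real.exp ((1 + K) * x))
      (Set.Icc (-M) M) := by
    refine monotoneOn_of_deriv_nonneg (convex_Icc _ _)
      (fun x _ => (hE _ x).continuousAt.continuousWithinAt)
      (fun x _ => (hE _ x).differentiableAt.differentiableWithinAt) fun x hx => ?_
    rw [(hE _ x).deriv]
    have := abs_le.1 (hkey x (interior_subset hx))
    exact mul_nonneg (by linarith) (Real.exp_pos _).le
  have hanti : AntitoneOn (fun x => (u x ^ 2 + deriv u x ^ 2) * Real.exp (-(1 + K) * x))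
      (Set.Icc (-M) M) := by
    refine antitoneOn_of_deriv_nonpos (convex_Icc _ _)
      (fun x _ => (hE _ x).continuousAt.continuousWithinAt)
      (fun x _ => (hE _ x).differentiableAt.differentiableWithinAt) fun x hx => ?_
    rw [(hE _ x).deriv]
    have := abs_le.1 (hkey x (interior_subset hx))
    exact mul_nonpos_of_nonpos_of_nonneg (by linarith) (Real.exp_pos _).le
  intro x hx
  have hfin : u x ^ 2 + deriv u x ^ 2 ≤ 0 := by
    rcases le_total x x₀ with h | h
    · have := hmono hx hx₀ h
      simp only [h0, h1] at this
      have hp := Real.exp_pos ((1 + K) * x)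
      by_contra hcon
      push Not at hcon
      have := mul_pos hcon hp
      norm_num at *
      linarith
    · have := hanti hx₀ hx h
      simp only [h0, h1] at this
      have hp := Real.exp_pos (-(1 + K) * x)
      by_contra hcon
      push Not at hcon
      have := mul_pos hcon hp
      norm_num at *
      linarith
  have : u x ^ 2 = 0 := le_antisymm (by nlinarith [sq_nonneg (deriv u x)]) (sq_nonneg _)
  exact pow_eq_zero_iff (two_ne_zero) |>.1 this

/-- Once the angle is at least `n * π`, it stays so. -/
theorem aux_barrier (a b : ℝ) (c θ : ℝ → ℝ) (l : ℝ) (hl : Real.sin l = 0)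
    (hθ : ∀ x ∈ Set.Icc a b, HasDerivAt θ (1 - (1 + c x) * Real.sin (θ x) ^ 2) x)
    (ha : l ≤ θ a) : ∀ x ∈ Set.Icc a b, l ≤ θ x := by
  intro x hx
  refine image_le_of_deriv_right_lt_deriv_boundary' (f := fun _ => l) (f' := fun _ => 0)
    continuousOn_const (fun x _ => hasDerivWithinAt_const _ _ _) ha
    (fun x hx => (hθ x hx).continuousAt.continuousWithinAt)
    (fun x hx => (hθ x ⟨hx.1, hx.2.le⟩).hasDerivWithinAt) (fun x _ h => ?_) hx
  rw [← h, hl]; norm_num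

theorem aux_barrier_up (a b : ℝ) (c θ : ℝ → ℝ) (hc : ∀ x ∈ Set.Icc a b, 0 < c x)
    (hθ : ∀ x ∈ Set.Icc a b, HasDerivAt θ (1 - (1 + c x) * Real.sin (θ x) ^ 2) x)
    (ha : θ a ≤ Real.pi / 2) : ∀ x ∈ Set.Icc a b, θ x ≤ Real.pi / 2 := by
  intro x hx
  refine image_le_of_deriv_right_lt_deriv_boundary' (B := fun _ => Real.pi / 2) (B' := fun _ => 0)
    (fun x hx => (hθ x hx).continuousAt.continuousWithinAt)
    (fun x hx => (hθ x ⟨hx.1, hx.2.le⟩).hasDerivWithinAt) ha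
    continuousOn_const (fun x _ => hasDerivWithinAt_const _ _ _) (fun x hx h => ?_) hx
  rw [h, Real.sin_pi_div_two]
  have := hc x ⟨hx.1, hx.2.le⟩
  linarith

theorem aux_dep (M : ℝ) (hM : 0 < M) (Q : ℝ → ℝ) (C : ℝ) (hC0 : 0 ≤ C) (L : ℝ) (hL : 0 ≤ L)
    (hC : ∀ t, |Q t| ≤ C) (θ : ℝ → ℝ → ℝ) (h0 : ∀ l, θ l (-M) = 0)
    (hθ : ∀ l, ∀ x ∈ Set.Icc (-M) M,
      HasDerivAt (θ l) (1 - (1 + (Q x + l)) * Real.sin (θ l x) ^ 2) x) :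
    ContinuousOn (fun l => θ l M) (Set.Icc 0 L) := by
  have hlip : ∀ l ∈ Set.Icc 0 L, ∀ t, LipschitzWith (Real.toNNReal (1 + (C + L)))
      (fun y : ℝ => 1 - (1 + (Q t + l)) * Real.sin y ^ 2) := by
    intro l hl t
    refine LipschitzWith.of_dist_le_mul fun a b => ?_
    rw [Real.dist_eq, Real.dist_eq, Real.coe_toNNReal _ (by linarith)]
    have h1 : 1 - (1 + (Q t + l)) * Real.sin a ^ 2 - (1 - (1 + (Q t + l)) * Real.sin b ^ 2)
        = -((1 + (Q t + l)) * (Real.sin (a + b) * Real.sin (a - b))) := by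
      rw [Real.sin_add, Real.sin_sub]
      have ha := Real.sin_sq_add_cos_sq a
      have hb := Real.sin_sq_add_cos_sq b
      linear_combination (-(1 + (Q t + l)) * Real.sin b ^ 2) * ha
        + ((1 + (Q t + l)) * Real.sin a ^ 2) * hb
    rw [h1, abs_neg, abs_mul, abs_mul]
    have h2 : |1 + (Q t + l)| ≤ 1 + (C + L) := by
      have := abs_le.1 (hC t)
      exact abs_le.2 ⟨by linarith [hl.1], by linarith [hl.2]⟩
    have h3 : |Real.sin (a - b)| ≤ |a - b| := Real.abs_sin_le_abs
    have h4 : |Real.sin (a + b)| ≤ 1 := Real.abs_sin_le_one _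
    have h5 : |Real.sin (a + b)| * |Real.sin (a - b)| ≤ 1 * |a - b| := by gcongr
    calc |1 + (Q t + l)| * (|Real.sin (a + b)| * |Real.sin (a - b)|)
        ≤ (1 + (C + L)) * (1 * |a - b|) := by gcongr
      _ = _ := by ring
  have hK : (1 + (C + L)) ≠ 0 := by positivity
  set A := (Real.exp ((1 + (C + L)) * (M - -M)) - 1) / (1 + (C + L)) with hA
  have hA0 : 0 ≤ A := by
    apply div_nonneg _ (by positivity)
    have : 1 ≤ Real.exp ((1 + (C + L)) * (M - -M)) := Real.one_le_exp (by
      have : 0 ≤ M - -M := by linarith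
      positivity)
    linarith
  refine LipschitzOnWith.continuousOn (K := Real.toNNReal A)
    (LipschitzOnWith.of_dist_le_mul fun l hl m hm => ?_)
  have := dist_le_of_approx_trajectories_ODE (hlip m hm) (f := θ l) (g := θ m)
    (a := -M) (b := M) (δ := 0) (εf := dist l m) (εg := 0)
    (fun x hx => (hθ l x hx).continuousAt.continuousWithinAt)
    (fun x hx => (hθ l x ⟨hx.1, hx.2.le⟩).hasDerivWithinAt)
    (fun x hx => ?_)
    (fun x hx => (hθ m x hx).continuousAt.continuousWithinAt)
    (fun x hx => (hθ m x ⟨hx.1, hx.2.le⟩).hasDerivWithinAt)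
    (fun x hx => by simp) (by simp [h0]) M ⟨by linarith, le_rfl⟩
  · rw [Real.coe_toNNReal _ (by linarith), gronwallBound_of_K_ne_0 hK] at this
    rw [Real.coe_toNNReal _ hA0]
    refine this.trans (le_of_eq ?_)
    rw [hA]
    field_simp
    ring
  · rw [Real.dist_eq, Real.dist_eq, show 1 - (1 + (Q x + l)) * Real.sin (θ l x) ^ 2
      - (1 - (1 + (Q x + m)) * Real.sin (θ l x) ^ 2) = -((l - m) * Real.sin (θ l x) ^ 2) by ring,
      abs_neg, abs_mul]
    have h3 := Real.sin_sq_le_one (θ l x)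
    rw [abs_of_nonneg (sq_nonneg (Real.sin _))]
    exact mul_le_of_le_one_right (abs_nonneg _) h3

theorem aux_main (M : ℝ) (hM : 0 < M) (q : ℝ → ℝ) (hq : ContinuousOn q (Set.Icc (-M) M))
    (hspec : ∀ lam : ℝ, ∀ ψ : ℝ → ℝ, ContDiff ℝ 2 ψ →
      (∀ x ∈ Set.Icc (-M) M, deriv (deriv ψ) x - q x * ψ x = lam * ψ x) →
      ψ (-M) = 0 → ψ M = 0 → (∃ x ∈ Set.Icc (-M) M, ψ x ≠ 0) → lam < 0)
    (φ₀ : ℝ → ℝ) (hφ₀ : ContDiff ℝ 2 φ₀)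
    (hφ₀ode : ∀ x ∈ Set.Icc (-M) M, deriv (deriv φ₀) x = q x * φ₀ x)
    (hφ₀bc : φ₀ (-M) = 0)
    (hφ₀ne : ∃ x ∈ Set.Icc (-M) M, φ₀ x ≠ 0) :
    ∀ x ∈ Set.Ioc (-M) M, φ₀ x ≠ 0 := by
  intro x₀ hx₀ hzero
  rcases eq_or_lt_of_le hx₀.2 with hEq | hlt
  · subst hEq
    exact lt_irrefl _ (hspec 0 φ₀ hφ₀ (fun x hx => by rw [hφ₀ode x hx]; ring) hφ₀bc hzero hφ₀ne)
  have hle : -M ≤ M := by linarith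
  have hx₀' : x₀ ∈ Set.Icc (-M) M := ⟨hx₀.1.le, hx₀.2⟩
  obtain ⟨C, hC⟩ := isCompact_Icc.exists_bound_of_continuousOn hq
  have hC0 : 0 ≤ C := (norm_nonneg _).trans (hC x₀ hx₀')
  set Q : ℝ → ℝ := Set.IccExtend hle ((Set.Icc (-M) M).restrict q) with hQdef
  have hQc : Continuous Q := (continuousOn_iff_continuous_restrict.1 hq).Icc_extend'
  have hQ : ∀ x ∈ Set.Icc (-M) M, Q x = q x := by
    intro x hx
    rw [hQdef, Set.IccExtend_of_mem _ _ hx]; rfl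
  have hQb : ∀ x, |Q x| ≤ C := fun x => hC _ (Set.projIcc (-M) M hle x).2
  have hex : ∀ l : ℝ, ∃ θ : ℝ → ℝ, Continuous θ ∧ θ (-M) = 0 ∧
      ∀ x ∈ Set.Icc (-M) M, HasDerivAt θ (1 - (1 + (Q x + l)) * Real.sin (θ x) ^ 2) x := fun l =>
    aux_prufer M hM (fun t => Q t + l) (by fun_prop) (C + |l|)
      fun t => (abs_add_le _ _).trans (by gcongr; exact hQb t)
  choose θ hθc hθ0 hθ using hex
  -- derivative of φ₀ at the zero is nonzero
  have hd : deriv φ₀ x₀ ≠ 0 := by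
    intro h
    obtain ⟨y, hy, hne⟩ := hφ₀ne
    exact hne (aux_unique M C q hC φ₀ hφ₀ hφ₀ode x₀ hx₀' hzero h y hy)
  -- the angle at the zero
  have hsin : Real.sin (θ 0 x₀) = 0 := by
    obtain ⟨r, hrpos, -, hr⟩ := aux_amp (fun t => Q t + 0) (θ 0) (-M) (by fun_prop) (hθc 0)
    have hu1 : ∀ x, HasDerivAt φ₀ (deriv φ₀ x) x := fun x =>
      (hφ₀.differentiable (by norm_num) x).hasDerivAt
    have hu2 : ContDiff ℝ 1 (deriv φ₀) := by
      rw [show (2 : WithTop ℕ∞) = 1 + 1 by norm_num, contDiff_succ_iff_deriv] at hφ₀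
      exact hφ₀.2.2
    have hu3 : ∀ x, HasDerivAt (deriv φ₀) (deriv (deriv φ₀) x) x := fun x =>
      (hu2.differentiable (by norm_num) x).hasDerivAt
    have hD : ∀ x ∈ Set.Icc (-M) M, HasDerivAt
        (fun x => r x * (φ₀ x * Real.cos (θ 0 x) - deriv φ₀ x * Real.sin (θ 0 x))) 0 x := by
      intro x hx
      refine ((hr x).mul (((hu1 x).mul (hθ 0 x hx).cos).sub
        ((hu3 x).mul (hθ 0 x hx).sin))).congr_deriv ?_
      rw [hφ₀ode x hx, ← hQ x hx]
      simp only [add_zero, Pi.mul_apply, Pi.sub_apply]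
      linear_combination (r x * (1 + Q x) * φ₀ x * Real.sin (θ 0 x)) *
        Real.sin_sq_add_cos_sq (θ 0 x)
    have := constant_of_has_deriv_right_zero (fun x hx => (hD x hx).continuousAt.continuousWithinAt)
      (fun x hx => (hD x ⟨hx.1, hx.2.le⟩).hasDerivWithinAt) x₀ hx₀'
    simpa [hφ₀bc, hθ0, hzero, (hrpos x₀).ne', hd] using this
  have hpi0 : Real.pi ≤ θ 0 x₀ := by
    have hnn := aux_barrier (-M) M (fun t => Q t + 0) (θ 0) 0 Real.sin_zero (hθ 0) (hθ0 0).ge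
    have hne : θ 0 x₀ ≠ 0 := by
      intro h
      have hloc : IsLocalMin (θ 0) x₀ := by
        filter_upwards [Icc_mem_nhds hx₀.1 hlt] with y hy
        rw [h]; exact hnn y hy
      have := hloc.hasDerivAt_eq_zero (hθ 0 x₀ hx₀')
      rw [hsin] at this
      norm_num at this
    by_contra hcon
    push Not at hcon
    exact (Real.sin_pos_of_pos_of_lt_pi (lt_of_le_of_ne (hnn x₀ hx₀') hne.symm) hcon).ne' hsin
  have hpiM : Real.pi ≤ θ 0 M :=
    aux_barrier x₀ M (fun t => Q t + 0) (θ 0) Real.pi Real.sin_pi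
      (fun x hx => hθ 0 x ⟨hx₀.1.le.trans hx.1, hx.2⟩) hpi0 M ⟨hlt.le, le_rfl⟩
  have hpiL : θ (C + 1) M ≤ Real.pi :=
    (aux_barrier_up (-M) M (fun t => Q t + (C + 1)) (θ (C + 1))
      (fun x _ => by have := abs_le.1 (hQb x); linarith) (hθ _)
      (by rw [hθ0]; positivity) M ⟨hle, le_rfl⟩).trans (by linarith [Real.pi_pos])
  have hcont := aux_dep M hM Q C hC0 (C + 1) (by linarith) hQb θ hθ0 hθ
  obtain ⟨l, hl, hlM⟩ := intermediate_value_Icc' (by linarith) hcont ⟨hpiL, hpiM⟩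
  obtain ⟨r, Φ, hrpos, hΦ, hΦs, hΦc, hΦode⟩ :=
    aux_sol M hM (fun t => Q t + l) (by fun_prop) (θ l) (hθc l) (hθ0 l) (hθ l)
  have hmm : -M ∈ Set.Icc (-M) M := ⟨le_rfl, hle⟩
  have hMM : M ∈ Set.Icc (-M) M := ⟨hle, le_rfl⟩
  have hneg := hspec l Φ hΦ (fun x hx => by rw [hΦode x hx, ← hQ x hx]; ring)
    (by rw [hΦs _ hmm, hθ0]; simp) (by rw [hΦs _ hMM]; simp only at hlM; rw [hlM]; simp) (by
      by_contra hcon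
      push Not at hcon
      have h1 : HasDerivWithinAt Φ (deriv Φ x₀) (Set.Icc (-M) M) x₀ :=
        (hΦ.differentiable (by norm_num) x₀).hasDerivAt.hasDerivWithinAt
      have hs : Real.sin (θ l x₀) = 0 := by
        have := hΦs x₀ hx₀'
        rw [hcon x₀ hx₀'] at this
        rcases mul_eq_zero.1 this.symm with h | h
        · exact absurd h (hrpos x₀).ne'
        · exact h
      have hev : Φ =ᶠ[nhds x₀] fun _ => (0 : ℝ) := by
        filter_upwards [Icc_mem_nhds hx₀.1 hlt] with y hy using hcon y hy
      have h2 := hΦc x₀ hx₀'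
      rw [hev.deriv_eq, deriv_const] at h2
      rcases mul_eq_zero.1 h2.symm with h | h
      · exact absurd h (hrpos x₀).ne'
      · have := Real.sin_sq_add_cos_sq (θ l x₀)
        rw [hs, h] at this
        norm_num at this)
  exact absurd hl.1 (not_le.2 hneg)

theorem aux_sign (M : ℝ) (φ : ℝ → ℝ) (hφ : Continuous φ) (h : ∀ x ∈ Set.Ioc (-M) M, φ x ≠ 0)
    (x : ℝ) (hx : x ∈ Set.Ioc (-M) M) : 0 < φ x / φ M := by
  have hM : M ∈ Set.Ioc (-M) M := ⟨lt_of_lt_of_le hx.1 hx.2, le_rfl⟩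
  by_contra hcon
  have hc : Continuous fun y => φ y / φ M := by fun_prop
  obtain ⟨y, hy, hy0⟩ := isPreconnected_Ioc.intermediate_value hx hM hc.continuousOn
    (show (0 : ℝ) ∈ Set.Icc _ _ from ⟨not_lt.1 hcon, by simp [div_self (h M hM)]⟩)
  simp only [div_eq_zero_iff] at hy0
  exact hy0.elim (h y hy) (h M hM)


/-- If the Dirichlet spectrum of D² - q on [-M,M] is strictly negative,
then nonzero solutions φ₀, ψ₀ of ψ'' = qψ vanishing at -M resp. M have no zeros in
(-M,M), are linearly independent, and the solution of the Dirichlet problem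
ψ'' = qψ, ψ(±M) = 1 is unique and strictly positive on [-M,M]. -/
theorem dirichlet_positive_solution
    (M : ℝ) (hM : 0 < M) (q : ℝ → ℝ) (hq : ContinuousOn q (Set.Icc (-M) M))
    (hspec : ∀ lam : ℝ, ∀ ψ : ℝ → ℝ, ContDiff ℝ 2 ψ →
      (∀ x ∈ Set.Icc (-M) M, deriv (deriv ψ) x - q x * ψ x = lam * ψ x) →
      ψ (-M) = 0 → ψ M = 0 → (∃ x ∈ Set.Icc (-M) M, ψ x ≠ 0) → lam < 0)
    (φ₀ ψ₀ : ℝ → ℝ) (hφ₀ : ContDiff ℝ 2 φ₀) (hψ₀ : ContDiff ℝ 2 ψ₀)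
    (hφ₀ode : ∀ x ∈ Set.Icc (-M) M, deriv (deriv φ₀) x = q x * φ₀ x)
    (hψ₀ode : ∀ x ∈ Set.Icc (-M) M, deriv (deriv ψ₀) x = q x * ψ₀ x)
    (hφ₀bc : φ₀ (-M) = 0) (hψ₀bc : ψ₀ M = 0)
    (hφ₀ne : ∃ x ∈ Set.Icc (-M) M, φ₀ x ≠ 0)
    (hψ₀ne : ∃ x ∈ Set.Icc (-M) M, ψ₀ x ≠ 0) :
    (∀ x ∈ Set.Ioo (-M) M, φ₀ x ≠ 0 ∧ ψ₀ x ≠ 0) ∧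
    (∀ c d : ℝ, (∀ x ∈ Set.Icc (-M) M, c * φ₀ x + d * ψ₀ x = 0) → c = 0 ∧ d = 0) ∧
    (∀ ψ₁ ψ₂ : ℝ → ℝ, ContDiff ℝ 2 ψ₁ → ContDiff ℝ 2 ψ₂ →
      (∀ x ∈ Set.Icc (-M) M, deriv (deriv ψ₁) x = q x * ψ₁ x) →
      (∀ x ∈ Set.Icc (-M) M, deriv (deriv ψ₂) x = q x * ψ₂ x) →
      ψ₁ (-M) = 1 → ψ₁ M = 1 → ψ₂ (-M) = 1 → ψ₂ M = 1 →
      ∀ x ∈ Set.Icc (-M) M, ψ₁ x = ψ₂ x) ∧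
    (∀ ψ : ℝ → ℝ, ContDiff ℝ 2 ψ →
      (∀ x ∈ Set.Icc (-M) M, deriv (deriv ψ) x = q x * ψ x) →
      ψ (-M) = 1 → ψ M = 1 → ∀ x ∈ Set.Icc (-M) M, 0 < ψ x) := by
  have hle : -M ≤ M := by linarith
  have hmm : -M ∈ Set.Icc (-M) M := ⟨le_rfl, hle⟩
  have hMM : M ∈ Set.Icc (-M) M := ⟨hle, le_rfl⟩
  have hnegmem : ∀ x, x ∈ Set.Icc (-M) M → -x ∈ Set.Icc (-M) M := fun x hx =>
    ⟨by linarith [hx.2], by linarith [hx.1]⟩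
  have hdd : ∀ f : ℝ → ℝ, ∀ x, deriv (deriv fun y => f (-y)) x = deriv (deriv f) (-x) := by
    intro f x
    have : (deriv fun y => f (-y)) = fun y => -deriv f (-y) := funext fun y => deriv_comp_neg f y
    rw [this, deriv.fun_neg, deriv_comp_neg (deriv f) x, neg_neg]
  have hφ := aux_main M hM q hq hspec φ₀ hφ₀ hφ₀ode hφ₀bc hφ₀ne
  have hψ' := aux_main M hM (fun x => q (-x)) (hq.comp continuous_neg.continuousOn hnegmem)
    (fun lam ψ hψ hode h1 h2 ⟨y, hy, hne⟩ => hspec lam (fun x => ψ (-x)) (hψ.comp contDiff_neg)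
      (fun x hx => by
        have := hode (-x) (hnegmem x hx)
        simp only [neg_neg] at this
        rw [hdd]; exact this)
      (by simpa using h2) h1 ⟨-y, hnegmem y hy, by simpa using hne⟩)
    (fun x => ψ₀ (-x)) (hψ₀.comp contDiff_neg)
    (fun x hx => by rw [hdd]; exact hψ₀ode (-x) (hnegmem x hx)) (by simpa using hψ₀bc)
    (by obtain ⟨y, hy, hne⟩ := hψ₀ne
        exact ⟨-y, hnegmem y hy, by simpa using hne⟩)
  have hφM : φ₀ M ≠ 0 := hφ M ⟨by linarith, le_rfl⟩
  have hψM : ψ₀ (-M) ≠ 0 := hψ' M ⟨by linarith, le_rfl⟩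
  have hdiff2 : ∀ f : ℝ → ℝ, ContDiff ℝ 2 f → Differentiable ℝ f ∧ Differentiable ℝ (deriv f) := by
    intro f hf
    refine ⟨hf.differentiable (by norm_num), ?_⟩
    rw [show (2 : WithTop ℕ∞) = 1 + 1 by norm_num, contDiff_succ_iff_deriv] at hf
    exact hf.2.2.differentiable (by norm_num)
  have huniq : ∀ ψ₁ ψ₂ : ℝ → ℝ, ContDiff ℝ 2 ψ₁ → ContDiff ℝ 2 ψ₂ →
      (∀ x ∈ Set.Icc (-M) M, deriv (deriv ψ₁) x = q x * ψ₁ x) →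
      (∀ x ∈ Set.Icc (-M) M, deriv (deriv ψ₂) x = q x * ψ₂ x) →
      ψ₁ (-M) = 1 → ψ₁ M = 1 → ψ₂ (-M) = 1 → ψ₂ M = 1 →
      ∀ x ∈ Set.Icc (-M) M, ψ₁ x = ψ₂ x := by
    intro ψ₁ ψ₂ h1 h2 o1 o2 a1 b1 a2 b2 x hx
    by_contra hne
    refine lt_irrefl _ (hspec 0 (fun x => ψ₁ x - ψ₂ x) (h1.sub h2) (fun x hx => ?_)
      (by simp [a1, a2]) (by simp [b1, b2]) ⟨x, hx, sub_ne_zero.2 hne⟩)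
    have : (deriv fun x => ψ₁ x - ψ₂ x) = fun x => deriv ψ₁ x - deriv ψ₂ x := funext fun y =>
      deriv_fun_sub ((hdiff2 _ h1).1 y) ((hdiff2 _ h2).1 y)
    rw [this, deriv_fun_sub ((hdiff2 _ h1).2 x) ((hdiff2 _ h2).2 x), o1 x hx, o2 x hx]
    ring
  refine ⟨fun x hx => ⟨hφ x ⟨hx.1, hx.2.le⟩, ?_⟩, fun c d h => ⟨?_, ?_⟩, huniq, ?_⟩
  · have := hψ' (-x) ⟨by linarith [hx.2], by linarith [hx.1]⟩
    simpa using this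
  · have := h M hMM
    simpa [hψ₀bc, hφM] using this
  · have := h (-M) hmm
    simpa [hφ₀bc, hψM] using this
  · intro ψ hψ ho ha hb x hx
    have hs1 := aux_sign M φ₀ hφ₀.continuous hφ
    have hs2 := aux_sign M (fun x => ψ₀ (-x)) (hψ₀.continuous.comp continuous_neg) hψ'
    have heq := huniq ψ (fun x => (φ₀ M)⁻¹ * φ₀ x + (ψ₀ (-M))⁻¹ * ψ₀ x) hψ
      ((contDiff_const.mul hφ₀).add (contDiff_const.mul hψ₀)) ho (fun x hx => ?_) ha hb
      (by simp [hφ₀bc, hψM]) (by simp [hψ₀bc, hφM]) x hx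
    · rw [heq]
      rcases eq_or_lt_of_le hx.1 with h | h
      · subst h
        simp [hφ₀bc, hψM]
      rcases eq_or_lt_of_le hx.2 with h' | h'
      · subst h'
        simp [hψ₀bc, hφM]
      have e1 := hs1 x ⟨h, hx.2⟩
      have e2 := hs2 (-x) ⟨by linarith, by linarith⟩
      simp only [neg_neg] at e2
      rw [div_eq_inv_mul] at e1 e2
      linarith
    · have d1 : ∀ f : ℝ → ℝ, ∀ g : ℝ → ℝ, Differentiable ℝ f → Differentiable ℝ g → ∀ a b : ℝ,
          (deriv fun x => a * f x + b * g x) = fun x => a * deriv f x + b * deriv g x := by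
        intro f g hf hg a b
        funext y
        rw [deriv_fun_add ((hf y).const_mul a) ((hg y).const_mul b),
          deriv_const_mul _ (hf y), deriv_const_mul _ (hg y)]
      rw [d1 _ _ (hdiff2 _ hφ₀).1 (hdiff2 _ hψ₀).1, d1 _ _ (hdiff2 _ hφ₀).2 (hdiff2 _ hψ₀).2]
      simp only
      rw [hφ₀ode x hx, hψ₀ode x hx]
      ring
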